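/- arXiv:2512.02547 — 2 statements merged into one kernel-verified Lean document; each statement's English description precedes it below -/
import Mathlib

section
/- Let D, R, P, N ∈ ℕ be positive, let y ∈ ℝ^N, λ ∈ ℝ^P, α > 0, and fix d ∈ {1,…,D}. For samples x_1, …, x_N, features ψ_{θ_p}^(j)(x_{n,j}) ∈ ℂ^{I_j}, and CPD cores W^(j) ∈ ℂ^{I_j × R} (j ≠ d fixed), define Φ_p ∈ ℂ^{N × I_1⋯I_D} with n-th row φ_{θ_p}(x_n)ᵀ, the matrix A_d ∈ ℂ^{N × I_d R} whose n-th row is the vector a_d from the core-linearity identity evaluated at x_n, and H_d = ⊛_{j≠d} W^(j)ᴴ W^(j). Then, as a function of v = vec(W^(d)), the Feature Learning objective satisfies exactly (1/2)‖y − Σ_{p=1}^P λ_p Φ_p w‖_2^2 + (α/2)‖w‖_2^2 = (1/2)‖y − A_d v‖_2^2 + (α/2) vᴴ (H_d ⊗ I_{I_d}) v, where w = Σ_{r=1}^R w_r^(D) ⊗ ⋯ ⊗ w_r^(1) is the rank-R CPD vector built from all cores. -/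
open Finset Matrix Kronecker

/-!
Contracting a rank-one tensor `⊗ⱼ aⱼ` with a CPD tensor factors over the modes, so it is linear in
each core separately: it equals `coreFeature d a W ⬝ᵥ vec (W d)`. Both terms of the objective are
instances of this one identity. For the data fit, `a` is a feature vector. For the regularizer, the
conjugate of `w` is itself a sum of rank-one tensors, whose factors are the conjugated columns of
the cores; their core features add up to `vec(W⁽ᵈ⁾)ᴴ (H_d ⊗ I)`.
-/

section CPD

variable {ι ρ K : Type*} {κ : ι → Type*} [Fintype ι] [CommSemiring K]

/-- The rank-one tensor `⊗ⱼ aⱼ`, as a vector indexed by multi-indices. -/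
def rankOneTensor (a : (j : ι) → κ j → K) : ((j : ι) → κ j) → K :=
  fun i => ∏ j, a j (i j)

/-- The canonical polyadic decomposition (CPD) with cores `W j`: the sum over `r` of the rank-one
tensors built from the `r`-th columns of the cores. -/
def cpdTensor [Fintype ρ] (W : (j : ι) → Matrix (κ j) ρ K) : ((j : ι) → κ j) → K :=
  ∑ r, rankOneTensor fun j => (W j).col r

theorem cpdTensor_apply [Fintype ρ] (W : (j : ι) → Matrix (κ j) ρ K) (i : (j : ι) → κ j) :
    cpdTensor W i = ∑ r, ∏ j, W j (i j) r :=
  Finset.sum_apply ..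

theorem star_rankOneTensor [StarRing K] (a : (j : ι) → κ j → K) :
    star (rankOneTensor a) = rankOneTensor fun j => star (a j) := by
  ext i
  simp [rankOneTensor, star_prod]

variable [DecidableEq ι] [∀ j, Fintype (κ j)]

theorem rankOneTensor_dotProduct_rankOneTensor (a b : (j : ι) → κ j → K) :
    rankOneTensor a ⬝ᵥ rankOneTensor b = ∏ j, a j ⬝ᵥ b j := by
  simp only [rankOneTensor, dotProduct, Fintype.prod_sum, Finset.prod_mul_distrib]

/-- The vector `a_d` of the core-linearity identity: the coefficients of `vec (W d)` in the
contraction of the CPD tensor with `⊗ⱼ aⱼ`, indexed by (column, row) as in `Matrix.vec`. -/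
def coreFeature (d : ι) (a : (j : ι) → κ j → K) (W : (j : ι) → Matrix (κ j) ρ K) :
    ρ × κ d → K :=
  fun x => (∏ j ∈ univ.erase d, (a j ᵥ* W j) x.1) * a d x.2

/-- The matrix `H_d`: the Hadamard product over `j ≠ d` of the Gram matrices of the cores. -/
def hadamardGramErase [StarRing K] (d : ι) (W : (j : ι) → Matrix (κ j) ρ K) : Matrix ρ ρ K :=
  of fun r s => ∏ j ∈ univ.erase d, ((W j)ᴴ * W j) r s

variable [Fintype ρ]

theorem rankOneTensor_dotProduct_cpdTensor (a : (j : ι) → κ j → K)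
    (W : (j : ι) → Matrix (κ j) ρ K) :
    rankOneTensor a ⬝ᵥ cpdTensor W = ∑ r, ∏ j, (a j ᵥ* W j) r := by
  simp only [cpdTensor, dotProduct_sum, rankOneTensor_dotProduct_rankOneTensor]
  rfl

theorem coreFeature_dotProduct_vec (d : ι) (a : (j : ι) → κ j → K)
    (W : (j : ι) → Matrix (κ j) ρ K) :
    coreFeature d a W ⬝ᵥ vec (W d) = rankOneTensor a ⬝ᵥ cpdTensor W := by
  calc coreFeature d a W ⬝ᵥ vec (W d)
      = ∑ r, (∏ j ∈ univ.erase d, (a j ᵥ* W j) r) * (a d ᵥ* W d) r := by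
        simp only [coreFeature, vec, vecMul, dotProduct, Fintype.sum_prod_type, mul_sum, mul_assoc]
    _ = rankOneTensor a ⬝ᵥ cpdTensor W := by
        simp only [rankOneTensor_dotProduct_cpdTensor, prod_erase_mul _ _ (mem_univ d)]

theorem sum_coreFeature_star_col [StarRing K] (d : ι) [DecidableEq (κ d)]
    (W : (j : ι) → Matrix (κ j) ρ K) :
    ∑ r, coreFeature d (fun j => star ((W j).col r)) W =
      star (vec (W d)) ᵥ* (hadamardGramErase d W ⊗ₖ (1 : Matrix (κ d) (κ d) K)) := by
  have hstar : star (vec (W d)) = vec ((W d).map star) := rfl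
  rw [hstar, vec_vecMul_kronecker, transpose_one, Matrix.one_mul]
  ext ⟨s, i⟩
  rw [Finset.sum_apply, vec, mul_apply]
  exact sum_congr rfl fun r _ => mul_comm ..

theorem star_cpdTensor_dotProduct_cpdTensor [StarRing K] (d : ι) [DecidableEq (κ d)]
    (W : (j : ι) → Matrix (κ j) ρ K) :
    star (cpdTensor W) ⬝ᵥ cpdTensor W =
      star (vec (W d)) ⬝ᵥ
        ((hadamardGramErase d W ⊗ₖ (1 : Matrix (κ d) (κ d) K)) *ᵥ vec (W d)) := by
  calc star (cpdTensor W) ⬝ᵥ cpdTensor W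
      = ∑ r, rankOneTensor (fun j => star ((W j).col r)) ⬝ᵥ cpdTensor W := by
        rw [← sum_dotProduct]
        simp only [cpdTensor, star_sum, star_rankOneTensor]
    _ = (∑ r, coreFeature d (fun j => star ((W j).col r)) W) ⬝ᵥ vec (W d) := by
        simp only [sum_dotProduct, coreFeature_dotProduct_vec]
    _ = star (vec (W d)) ⬝ᵥ
          ((hadamardGramErase d W ⊗ₖ (1 : Matrix (κ d) (κ d) K)) *ᵥ vec (W d)) := by
        rw [sum_coreFeature_star_col, dotProduct_mulVec]

end CPD

theorem fl_objective_core_reduction_general {ι ρ π ν K : Type*} {κ : ι → Type*}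
    [Fintype ι] [DecidableEq ι] [Fintype ρ] [Fintype π] [Fintype ν] [∀ j, Fintype (κ j)]
    [CommRing K] [StarRing K] (d : ι) [DecidableEq (κ d)]
    (a b : K) (y : ν → K) (lam : π → K)
    (ψ : π → ν → (j : ι) → κ j → K)
    (W : (j : ι) → Matrix (κ j) ρ K)
    (Φ : π → Matrix ν ((j : ι) → κ j) K)
    (hΦ : ∀ p n i, Φ p n i = ∏ j, ψ p n j (i j))
    (w : ((j : ι) → κ j) → K)
    (hw : ∀ i, w i = ∑ r, ∏ j, W j (i j) r)
    (A : Matrix ν (ρ × κ d) K)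
    (hA : ∀ n r i, A n (r, i) =
      ∑ p, lam p * (∏ j ∈ univ.erase d, ∑ k, ψ p n j k * W j k r) * ψ p n d i)
    (H : Matrix ρ ρ K)
    (hH : ∀ r s, H r s = ∏ j ∈ univ.erase d, ∑ k, starRingEnd K (W j k r) * W j k s)
    (v : ρ × κ d → K)
    (hv : ∀ r i, v (r, i) = W d i r) :
    a * (∑ n, starRingEnd K (y n - ∑ p, lam p * (Φ p *ᵥ w) n) *
          (y n - ∑ p, lam p * (Φ p *ᵥ w) n))
      + b * (∑ i, starRingEnd K (w i) * w i)
    = a * (∑ n, starRingEnd K (y n - (A *ᵥ v) n) * (y n - (A *ᵥ v) n))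
      + b * (star v ⬝ᵥ ((H ⊗ₖ (1 : Matrix (κ d) (κ d) K)) *ᵥ v)) := by
  obtain rfl : w = cpdTensor W := funext fun i => (hw i).trans (cpdTensor_apply W i).symm
  obtain rfl : v = vec (W d) := funext fun x => hv x.1 x.2
  obtain rfl : H = hadamardGramErase d W := Matrix.ext hH
  have hΦ_row : ∀ p n, Φ p n = rankOneTensor (ψ p n) := fun p n => funext (hΦ p n)
  have hA_row : ∀ n, A n = ∑ p, lam p • coreFeature d (ψ p n) W := by
    intro n
    ext ⟨r, i⟩
    simp only [hA, Finset.sum_apply, Pi.smul_apply, smul_eq_mul, mul_assoc]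
    rfl
  have hfit : ∀ n, ∑ p, lam p * (Φ p *ᵥ cpdTensor W) n = (A *ᵥ vec (W d)) n := by
    intro n
    simp only [mulVec, hΦ_row, hA_row, sum_dotProduct, smul_dotProduct, smul_eq_mul,
      coreFeature_dotProduct_vec]
  have hreg : ∑ i, starRingEnd K (cpdTensor W i) * cpdTensor W i =
      star (vec (W d)) ⬝ᵥ
        ((hadamardGramErase d W ⊗ₖ (1 : Matrix (κ d) (κ d) K)) *ᵥ vec (W d)) :=
    star_cpdTensor_dotProduct_cpdTensor d W
  simp only [hfit, hreg]

/-- With `λ` and all CPD cores except the `d`-th fixed, the Feature Learning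
objective `(1/2)‖y − Σ_p λ_p Φ_p w‖² + (α/2)‖w‖²` reduces exactly to the
regularized linear least squares objective
`(1/2)‖y − A_d v‖² + (α/2) vᴴ (H_d ⊗ I) v` in `v = vec(W⁽ᵈ⁾)`. -/
theorem fl_objective_core_reduction
    (D R P N : ℕ) (hD : 0 < D) (hR : 0 < R) (hP : 0 < P) (hN : 0 < N)
    (I : Fin D → ℕ)
    (y : Fin N → ℝ) (lam : Fin P → ℝ) (α : ℝ) (hα : 0 < α)
    (d : Fin D)
    (ψ : Fin P → Fin N → (j : Fin D) → Fin (I j) → ℂ)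
    (W : (j : Fin D) → Matrix (Fin (I j)) (Fin R) ℂ)
    (Φ : Fin P → Matrix (Fin N) ((j : Fin D) → Fin (I j)) ℂ)
    (hΦ : ∀ p n i, Φ p n i = ∏ j, ψ p n j (i j))
    (w : ((j : Fin D) → Fin (I j)) → ℂ)
    (hw : ∀ i, w i = ∑ r, ∏ j, W j (i j) r)
    (A : Matrix (Fin N) (Fin R × Fin (I d)) ℂ)
    (hA : ∀ n r i, A n (r, i) =
      ∑ p, (lam p : ℂ) *
        (∏ j ∈ Finset.univ.erase d, ∑ i' : Fin (I j), ψ p n j i' * W j i' r) *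
        ψ p n d i)
    (H : Matrix (Fin R) (Fin R) ℂ)
    (hH : ∀ r s, H r s =
      ∏ j ∈ Finset.univ.erase d,
        ∑ i : Fin (I j), (starRingEnd ℂ) (W j i r) * W j i s)
    (v : Fin R × Fin (I d) → ℂ)
    (hv : ∀ r i, v (r, i) = W d i r) :
    (1 / 2 : ℂ) * (∑ n,
        (starRingEnd ℂ) ((y n : ℂ) - ∑ p, (lam p : ℂ) * ((Φ p *ᵥ w) n)) *
          ((y n : ℂ) - ∑ p, (lam p : ℂ) * ((Φ p *ᵥ w) n)))
      + ((α : ℂ) / 2) * (∑ i, (starRingEnd ℂ) (w i) * w i)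
    = (1 / 2 : ℂ) * (∑ n,
        (starRingEnd ℂ) ((y n : ℂ) - (A *ᵥ v) n) * ((y n : ℂ) - (A *ᵥ v) n))
      + ((α : ℂ) / 2) *
          (star v ⬝ᵥ ((H ⊗ₖ (1 : Matrix (Fin (I d)) (Fin (I d)) ℂ)) *ᵥ v)) :=
  fl_objective_core_reduction_general (K := ℂ) d (1 / 2) (α / 2) (fun n => y n) (fun p => lam p)
    ψ W Φ hΦ w hw A hA H hH v hv
end

section
/- Let N, P ∈ ℕ be positive, F ∈ ℝ^{N × P}, y ∈ ℝ^N. Suppose that every minimizer of λ ↦ ‖y − Fλ‖_2 over ℝ^P has Euclidean norm strictly greater than 1 (equivalently, the minimum-norm least squares solution F⁺y satisfies ‖F⁺y‖_2 > 1). Then there exists a unique μ > 0 such that ‖(FᵀF + μI)^{-1}Fᵀy‖_2 = 1, and λ* = (FᵀF + μI)^{-1}Fᵀy is the unique global minimizer of (1/2)‖y − Fλ‖_2^2 over the closed unit ball {λ ∈ ℝ^P : ‖λ‖_2 ≤ 1}; moreover ‖λ*‖_2 = 1. -/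
open Finset Matrix

/-!
The regularized solution `s μ = (A†A + μ)⁻¹ A† y` satisfies the normal equation
`A† (A (s μ)) + μ • s μ = A† y`, so completing the square shows that `u` has regularized cost
`‖y - A u‖² + μ‖u‖²` exceeding that of `s μ` by exactly `‖A (u - s μ)‖² + μ‖u - s μ‖²`. In
particular `s μ` is the unique least squares minimizer over the ball of radius `‖s μ‖`.

Adding the identities for two parameters `ν < μ` gives `‖s ν - s μ‖² ≤ ‖s ν‖² - ‖s μ‖²`. Hence
`‖s ·‖` is strictly decreasing (unless `A† y = 0`) and, if `‖s ·‖` were bounded by `r`, then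
`s μ` would converge as `μ → 0⁺`, to a least squares minimizer of norm at most `r`. When there is
none, `‖s ·‖` exceeds `r` somewhere, and it tends to `0` at infinity, so it takes the value `r`
exactly once.
-/

lemma map_ringInverse {M N G : Type*} [MonoidWithZero M] [MonoidWithZero N] [FunLike G M N]
    [MonoidWithZeroHomClass G M N] (f : G) [IsLocalHom f] (a : M) :
    f (Ring.inverse a) = Ring.inverse (f a) := by
  by_cases ha : IsUnit a
  · obtain ⟨u, rfl⟩ := ha
    rw [Ring.inverse_unit]
    exact (Ring.inverse_unit (u.map (f : M →* N))).symm
  · rw [Ring.inverse_non_unit _ ha, map_zero,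
      Ring.inverse_non_unit _ ((isUnit_map_iff f a).not.2 ha)]

section Tikhonov

open Filter Set Topology
open scoped InnerProduct InnerProductSpace

variable {𝕜 E F : Type*} [RCLike 𝕜]
  [NormedAddCommGroup E] [InnerProductSpace 𝕜 E] [CompleteSpace E]
  [NormedAddCommGroup F] [InnerProductSpace 𝕜 F] [CompleteSpace F]
  (A : E →L[𝕜] F) (y : F) {μ ν r : ℝ}

/-- The Tikhonov-regularized (ridge regression) solution `(A†A + μ)⁻¹ A† y` of the least squares
problem `A x ≈ y`. The inverse is `Ring.inverse`, which is `0` where `A†A + μ` is not invertible;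
this cannot happen for `0 < μ`. -/
noncomputable def tikhonovSolution (μ : ℝ) : E :=
  Ring.inverse (A† ∘L A + (μ : 𝕜) • 1) ((A†) y)

lemma isUnit_adjoint_comp_self_add_smul_one (hμ : 0 < μ) :
    IsUnit (A† ∘L A + (μ : 𝕜) • 1) := by
  refine ContinuousLinearMap.isUnit_of_forall_le_norm_inner_map _ (c := ⟨μ, hμ.le⟩) hμ fun x => ?_
  calc ‖x‖ ^ 2 * μ
      ≤ ‖A x‖ ^ 2 + μ * ‖x‖ ^ 2 := by nlinarith [sq_nonneg ‖A x‖]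
    _ = RCLike.re ⟪(A† ∘L A + (μ : 𝕜) • 1) x, x⟫_𝕜 := by
      simp [inner_add_left, inner_smul_left, ContinuousLinearMap.adjoint_inner_left]
    _ ≤ ‖⟪(A† ∘L A + (μ : 𝕜) • 1) x, x⟫_𝕜‖ := RCLike.re_le_norm _

lemma tikhonovSolution_normal_equation (hμ : 0 < μ) :
    (A†) (A (tikhonovSolution A y μ)) + (μ : 𝕜) • tikhonovSolution A y μ = (A†) y :=
  DFunLike.congr_fun
    (Ring.mul_inverse_cancel _ (isUnit_adjoint_comp_self_add_smul_one A hμ)) ((A†) y)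

lemma tikhonovSolution_complete_square (hμ : 0 < μ) (u : E) :
    ‖y - A u‖ ^ 2 + μ * ‖u‖ ^ 2 =
      ‖y - A (tikhonovSolution A y μ)‖ ^ 2 + μ * ‖tikhonovSolution A y μ‖ ^ 2 +
        (‖A (u - tikhonovSolution A y μ)‖ ^ 2 + μ * ‖u - tikhonovSolution A y μ‖ ^ 2) := by
  have hnormal := tikhonovSolution_normal_equation A y hμ
  set s := tikhonovSolution A y μ
  obtain ⟨d, rfl⟩ : ∃ d, u = s + d := ⟨u - s, by abel⟩
  have hcross : RCLike.re ⟪y - A s, A d⟫_𝕜 = μ * RCLike.re ⟪s, d⟫_𝕜 := by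
    rw [← ContinuousLinearMap.adjoint_inner_left, map_sub, ← hnormal, add_sub_cancel_left,
      inner_smul_left, RCLike.conj_ofReal, RCLike.re_ofReal_mul]
  rw [add_sub_cancel_left, map_add, ← sub_sub, norm_sub_sq (𝕜 := 𝕜), norm_add_sq (𝕜 := 𝕜), hcross]
  ring

lemma norm_sub_map_tikhonovSolution_lt (hμ : 0 < μ) {u : E}
    (hu : ‖u‖ ≤ ‖tikhonovSolution A y μ‖) (hne : u ≠ tikhonovSolution A y μ) :
    ‖y - A (tikhonovSolution A y μ)‖ < ‖y - A u‖ := by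
  have hsq := tikhonovSolution_complete_square A y hμ u
  have hnorm : μ * ‖u‖ ^ 2 ≤ μ * ‖tikhonovSolution A y μ‖ ^ 2 := by gcongr
  have hdist : 0 < μ * ‖u - tikhonovSolution A y μ‖ ^ 2 := by
    have := norm_sub_pos_iff.2 hne
    positivity
  refine lt_of_pow_lt_pow_left₀ 2 (norm_nonneg _) ?_
  linarith [sq_nonneg ‖A (u - tikhonovSolution A y μ)‖]

lemma mul_norm_tikhonovSolution_sq_le (hμ : 0 < μ) :
    μ * ‖tikhonovSolution A y μ‖ ^ 2 ≤ ‖y‖ ^ 2 := by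
  have hsq := tikhonovSolution_complete_square A y hμ 0
  simp only [map_zero, sub_zero, zero_sub, map_neg, norm_neg, norm_zero] at hsq
  nlinarith [sq_nonneg ‖y - A (tikhonovSolution A y μ)‖, sq_nonneg ‖A (tikhonovSolution A y μ)‖,
    mul_nonneg hμ.le (sq_nonneg ‖tikhonovSolution A y μ‖)]

lemma tendsto_norm_tikhonovSolution_atTop :
    Tendsto (fun μ => ‖tikhonovSolution A y μ‖) atTop (𝓝 0) := by
  have hbound : Tendsto (fun μ : ℝ => √(‖y‖ ^ 2 / μ)) atTop (𝓝 0) := by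
    simpa only [Real.sqrt_zero, id_eq] using (tendsto_const_nhds.div_atTop tendsto_id).sqrt
  refine squeeze_zero' (.of_forall fun _ => norm_nonneg _) ?_ hbound
  filter_upwards [eventually_gt_atTop 0] with μ hμ
  refine Real.le_sqrt_of_sq_le ((le_div_iff₀' hμ).2 ?_)
  exact mul_norm_tikhonovSolution_sq_le A y hμ

lemma continuousOn_tikhonovSolution : ContinuousOn (tikhonovSolution A y) (Ioi 0) := by
  intro μ hμ
  have hinv : ContinuousAt Ring.inverse (A† ∘L A + (μ : 𝕜) • 1) :=
    NormedRing.inverse_continuousAt (isUnit_adjoint_comp_self_add_smul_one A hμ).unit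
  have hadd : Continuous fun μ : ℝ => A† ∘L A + (μ : 𝕜) • (1 : E →L[𝕜] E) := by fun_prop
  exact ((hinv.comp (f := fun μ : ℝ => A† ∘L A + (μ : 𝕜) • 1) hadd.continuousAt).clm_apply
    continuousAt_const).continuousWithinAt

lemma sub_mul_norm_tikhonovSolution_sq_sub (hν : 0 < ν) (hμ : 0 < μ) :
    (μ - ν) * (‖tikhonovSolution A y ν‖ ^ 2 - ‖tikhonovSolution A y μ‖ ^ 2) =
      2 * ‖A (tikhonovSolution A y ν - tikhonovSolution A y μ)‖ ^ 2 +
        (μ + ν) * ‖tikhonovSolution A y ν - tikhonovSolution A y μ‖ ^ 2 := by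
  have hsqν := tikhonovSolution_complete_square A y hν (tikhonovSolution A y μ)
  have hsqμ := tikhonovSolution_complete_square A y hμ (tikhonovSolution A y ν)
  rw [← neg_sub (tikhonovSolution A y ν), map_neg, norm_neg, norm_neg] at hsqν
  linarith

lemma norm_tikhonovSolution_sub_sq_le (hν : 0 < ν) (hνμ : ν ≤ μ) :
    ‖tikhonovSolution A y ν - tikhonovSolution A y μ‖ ^ 2 ≤
      ‖tikhonovSolution A y ν‖ ^ 2 - ‖tikhonovSolution A y μ‖ ^ 2 := by
  rcases hνμ.eq_or_lt with rfl | hlt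
  · simp
  refine le_of_mul_le_mul_left ?_ (sub_pos.2 hlt)
  rw [sub_mul_norm_tikhonovSolution_sq_sub A y hν (hν.trans hlt)]
  nlinarith [sq_nonneg ‖A (tikhonovSolution A y ν - tikhonovSolution A y μ)‖,
    mul_nonneg hν.le (sq_nonneg ‖tikhonovSolution A y ν - tikhonovSolution A y μ‖)]

lemma norm_tikhonovSolution_sub_sq_le_abs (hν : 0 < ν) (hμ : 0 < μ) :
    ‖tikhonovSolution A y ν - tikhonovSolution A y μ‖ ^ 2 ≤
      |‖tikhonovSolution A y ν‖ ^ 2 - ‖tikhonovSolution A y μ‖ ^ 2| := by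
  wlog hle : ν ≤ μ generalizing ν μ
  · rw [norm_sub_rev, abs_sub_comm]
    exact this hμ hν (le_of_not_ge hle)
  exact (norm_tikhonovSolution_sub_sq_le A y hν hle).trans (le_abs_self _)

lemma tikhonovSolution_injOn (h : (A†) y ≠ 0) : InjOn (tikhonovSolution A y) (Ioi 0) := by
  intro ν hν μ hμ heq
  have hnormal := tikhonovSolution_normal_equation A y hν
  have hsmul : (ν : 𝕜) • tikhonovSolution A y μ = (μ : 𝕜) • tikhonovSolution A y μ := by
    rw [← tikhonovSolution_normal_equation A y hμ, heq] at hnormal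
    exact add_left_cancel hnormal
  have hne : tikhonovSolution A y μ ≠ 0 := fun h0 => h <| by
    simpa [h0] using (tikhonovSolution_normal_equation A y hμ).symm
  exact RCLike.ofReal_injective (smul_left_injective 𝕜 hne hsmul)

lemma strictAntiOn_norm_tikhonovSolution (h : (A†) y ≠ 0) :
    StrictAntiOn (fun μ => ‖tikhonovSolution A y μ‖) (Ioi 0) := by
  intro ν hν μ hμ hlt
  have hdist : 0 < ‖tikhonovSolution A y ν - tikhonovSolution A y μ‖ ^ 2 := by
    have := norm_sub_pos_iff.2 ((tikhonovSolution_injOn A y h).ne hν hμ hlt.ne)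
    positivity
  refine lt_of_pow_lt_pow_left₀ 2 (norm_nonneg _) (sub_pos.1 ?_)
  exact hdist.trans_le (norm_tikhonovSolution_sub_sq_le A y hν hlt.le)

lemma exists_tendsto_tikhonovSolution_nhdsGT_zero
    (hr : ∀ μ, 0 < μ → ‖tikhonovSolution A y μ‖ ≤ r) :
    ∃ x, Tendsto (tikhonovSolution A y) (𝓝[>] 0) (𝓝 x) := by
  have hanti : AntitoneOn (fun μ => ‖tikhonovSolution A y μ‖ ^ 2) (Ioi 0) := fun ν hν μ _ hνμ =>
    sub_nonneg.1 ((sq_nonneg _).trans (norm_tikhonovSolution_sub_sq_le A y hν hνμ))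
  have hbdd : BddAbove ((fun μ => ‖tikhonovSolution A y μ‖ ^ 2) '' Ioi 0) :=
    ⟨r ^ 2, forall_mem_image.2 fun μ hμ => pow_le_pow_left₀ (norm_nonneg _) (hr μ hμ) 2⟩
  have hcauchy := (IsUniformAddGroup.cauchy_map_iff_tendsto _ _).1
    (hanti.tendsto_nhdsGT hbdd).cauchy_map
  refine cauchy_map_iff_exists_tendsto.1 <|
    (IsUniformAddGroup.cauchy_map_iff_tendsto _ _).2 ⟨inferInstance, ?_⟩
  refine squeeze_zero_norm' ?_ (by simpa using hcauchy.2.norm.sqrt)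
  filter_upwards [prod_mem_prod self_mem_nhdsWithin self_mem_nhdsWithin] with ⟨ν, μ⟩ ⟨hν, hμ⟩
  exact Real.le_sqrt_of_sq_le (norm_tikhonovSolution_sub_sq_le_abs A y hν hμ)

lemma exists_leastSquares_norm_le (hr : ∀ μ, 0 < μ → ‖tikhonovSolution A y μ‖ ≤ r) :
    ∃ x, (∀ u, ‖y - A x‖ ≤ ‖y - A u‖) ∧ ‖x‖ ≤ r := by
  obtain ⟨x, hx⟩ := exists_tendsto_tikhonovSolution_nhdsGT_zero A y hr
  refine ⟨x, fun u => ?_, le_of_tendsto hx.norm (eventually_mem_nhdsWithin.mono hr)⟩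
  have hcost : Tendsto (fun μ => ‖y - A u‖ ^ 2 + μ * ‖u‖ ^ 2) (𝓝[>] 0) (𝓝 (‖y - A u‖ ^ 2)) := by
    have : Continuous fun μ => ‖y - A u‖ ^ 2 + μ * ‖u‖ ^ 2 := by fun_prop
    simpa using (this.tendsto 0).mono_left nhdsWithin_le_nhds
  have hres := (((A.continuous.tendsto x).comp hx).const_sub y).norm.pow 2
  refine le_of_pow_le_pow_left₀ two_ne_zero (norm_nonneg _) (le_of_tendsto_of_tendsto hres hcost ?_)
  filter_upwards [self_mem_nhdsWithin] with μ (hμ : 0 < μ)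
  rw [tikhonovSolution_complete_square A y hμ u, add_assoc]
  exact le_add_of_nonneg_right (by positivity)

theorem fixed_norm_regularization_general (hr : 0 < r)
    (hmin : ∀ x, (∀ u, ‖y - A x‖ ≤ ‖y - A u‖) → r < ‖x‖) :
    (∃! μ : ℝ, 0 < μ ∧ ‖tikhonovSolution A y μ‖ = r) ∧
    ∀ μ : ℝ, 0 < μ → ‖tikhonovSolution A y μ‖ = r →
      ∀ u, ‖u‖ ≤ r → u ≠ tikhonovSolution A y μ →
        ‖y - A (tikhonovSolution A y μ)‖ < ‖y - A u‖ := by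
  refine ⟨?_, fun μ hμ hμr u hu hne => norm_sub_map_tikhonovSolution_lt A y hμ (hμr ▸ hu) hne⟩
  obtain ⟨a, ha, har⟩ : ∃ a, 0 < a ∧ r < ‖tikhonovSolution A y a‖ := by
    by_contra! hle
    obtain ⟨x, hx, hxr⟩ := exists_leastSquares_norm_le A y hle
    exact (hmin x hx).not_ge hxr
  obtain ⟨b, hbr, hb⟩ : ∃ b, ‖tikhonovSolution A y b‖ ≤ r ∧ 0 < b :=
    (((tendsto_norm_tikhonovSolution_atTop A y).eventually_le_const hr).and
      (eventually_gt_atTop 0)).exists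
  obtain ⟨μ, hμ, hμr⟩ := isPreconnected_Ioi.intermediate_value hb ha
    (continuousOn_tikhonovSolution A y).norm ⟨hbr, har.le⟩
  have hAy : (A†) y ≠ 0 := fun h => hr.ne (by simpa [tikhonovSolution, h] using hμr)
  exact ⟨μ, ⟨hμ, hμr⟩, fun ν ⟨hν, hνr⟩ =>
    (strictAntiOn_norm_tikhonovSolution A y hAy).injOn hν hμ (hνr.trans hμr.symm)⟩

end Tikhonov

open scoped InnerProduct in
lemma tikhonovSolution_toEuclideanLin {𝕜 m n : Type*} [RCLike 𝕜] [Fintype m] [Fintype n]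
    [DecidableEq n] (F : Matrix m n 𝕜) (y : m → 𝕜) (μ : ℝ) :
    tikhonovSolution (toEuclideanLin F).toContinuousLinearMap (WithLp.toLp 2 y) μ =
      WithLp.toLp 2 ((Fᴴ * F + (μ : 𝕜) • (1 : Matrix n n 𝕜))⁻¹ *ᵥ (Fᴴ *ᵥ y)) := by
  classical
  have hadj : ((toEuclideanLin F).toContinuousLinearMap)† =
      (toEuclideanLin Fᴴ).toContinuousLinearMap := by
    rw [toEuclideanLin_conjTranspose_eq_adjoint, LinearMap.adjoint_toContinuousLinearMap]
  have hgram : (toEuclideanLin Fᴴ).toContinuousLinearMap ∘L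
      (toEuclideanLin F).toContinuousLinearMap = toEuclideanCLM (𝕜 := 𝕜) (Fᴴ * F) :=
    ContinuousLinearMap.ext fun x => congrArg (WithLp.toLp 2) (mulVec_mulVec x.ofLp Fᴴ F)
  have hshift : (toEuclideanLin Fᴴ).toContinuousLinearMap ∘L
      (toEuclideanLin F).toContinuousLinearMap + (μ : 𝕜) • 1 =
      toEuclideanCLM (𝕜 := 𝕜) (Fᴴ * F + (μ : 𝕜) • (1 : Matrix n n 𝕜)) := by
    rw [hgram, map_add, map_smul, map_one]
  rw [tikhonovSolution, hadj, hshift, ← map_ringInverse, ← nonsing_inv_eq_ringInverse]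
  rfl

/-- Fixed-norm regularized least squares: if every least squares minimizer of
`λ ↦ ‖y − Fλ‖₂` has Euclidean norm strictly greater than 1, then there is a unique
`μ > 0` with `‖(FᵀF + μI)⁻¹Fᵀy‖₂ = 1`, and for such `μ` the vector
`λ* = (FᵀF + μI)⁻¹Fᵀy` is the unique global minimizer of `(1/2)‖y − Fλ‖₂²` over
the closed unit ball, with `‖λ*‖₂ = 1`. -/
theorem fixed_norm_regularization
    (N P : ℕ) (hN : 0 < N) (hP : 0 < P)
    (F : Matrix (Fin N) (Fin P) ℝ) (y : Fin N → ℝ)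
    (sol : ℝ → Fin P → ℝ)
    (hsol : ∀ μ, sol μ =
      (Fᵀ * F + μ • (1 : Matrix (Fin P) (Fin P) ℝ))⁻¹ *ᵥ (Fᵀ *ᵥ y))
    (hmin : ∀ lam : Fin P → ℝ,
      (∀ u, ∑ n, (y n - (F *ᵥ lam) n) ^ 2 ≤ ∑ n, (y n - (F *ᵥ u) n) ^ 2) →
      1 < ∑ i, lam i ^ 2) :
    (∃! μ : ℝ, 0 < μ ∧ ∑ i, sol μ i ^ 2 = 1) ∧
    ∀ μ : ℝ, 0 < μ → (∑ i, sol μ i ^ 2 = 1) →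
      ∀ u : Fin P → ℝ, (∑ i, u i ^ 2) ≤ 1 → u ≠ sol μ →
        ∑ n, (y n - (F *ᵥ sol μ) n) ^ 2 < ∑ n, (y n - (F *ᵥ u) n) ^ 2 := by
  set A := (toEuclideanLin F).toContinuousLinearMap
  have hnorm {k : ℕ} (x : Fin k → ℝ) : ∑ i, x i ^ 2 = ‖WithLp.toLp 2 x‖ ^ 2 :=
    (EuclideanSpace.real_norm_sq_eq _).symm
  have hres (u : Fin P → ℝ) :
      ∑ n, (y n - (F *ᵥ u) n) ^ 2 = ‖WithLp.toLp 2 y - A (WithLp.toLp 2 u)‖ ^ 2 :=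
    hnorm (y - F *ᵥ u)
  have htikhonov (μ : ℝ) : WithLp.toLp 2 (sol μ) = tikhonovSolution A (WithLp.toLp 2 y) μ := by
    rw [tikhonovSolution_toEuclideanLin, hsol, conjTranspose_eq_transpose_of_trivial]
    rfl
  simp only [hres, hnorm, htikhonov, sq_le_sq₀, sq_lt_sq₀, norm_nonneg, sq_le_one_iff₀,
    one_lt_sq_iff₀, pow_eq_one_iff_of_nonneg, ne_eq, OfNat.ofNat_ne_zero,
    not_false_eq_true] at hmin ⊢
  obtain ⟨hexists, hunique⟩ := fixed_norm_regularization_general A (WithLp.toLp 2 y) one_pos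
    fun x hx => hmin x.ofLp fun u => hx (WithLp.toLp 2 u)
  exact ⟨hexists, fun μ hμ hμ1 u hu hne => hunique μ hμ hμ1 _ hu fun h =>
    hne (WithLp.toLp_injective 2 (h.trans (htikhonov μ).symm))⟩
end
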